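/- L R + 2 I_{ns} = τ (1ᵀ ⊗ I_s). -/

import Mathlib

open Matrix Finset
open scoped Kronecker

noncomputable section

/-- The `ns × s` matrix `1 ⊗ Iₛ`, where `1` is the all-ones column vector. -/
def oneKron (n s : ℕ) : Matrix (Fin n × Fin s) (Fin s) ℝ :=
  Matrix.of fun p b => if p.2 = b then 1 else 0

/-- The `ns × ns` matrix `J ⊗ Iₛ`, where `J` is the all-ones matrix. -/
def JKron (n s : ℕ) : Matrix (Fin n × Fin s) (Fin n × Fin s) ℝ :=
  (Matrix.of fun _ _ : Fin n => (1 : ℝ)) ⊗ₖ (1 : Matrix (Fin s) (Fin s) ℝ)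

/-- The Laplacian matrix of a graph whose edges `{i,j}` are weighted by
positive definite `s × s` matrices `W i j`: the `(i,i)` block is
`Σ_{j ∼ i} (W i j)⁻¹`, the `(i,j)` block for `i ≠ j` is `-(W i j)⁻¹` if `i ∼ j`
and `0` otherwise. -/
def lap {n s : ℕ} (G : SimpleGraph (Fin n)) [DecidableRel G.Adj]
    (W : Fin n → Fin n → Matrix (Fin s) (Fin s) ℝ) :
    Matrix (Fin n × Fin s) (Fin n × Fin s) ℝ :=
  Matrix.of fun p q =>
    if p.1 = q.1 then (∑ k ∈ univ.filter (fun k => G.Adj p.1 k), (W p.1 k)⁻¹) p.2 q.2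
    else if G.Adj p.1 q.1 then -((W p.1 q.1)⁻¹ p.2 q.2) else 0

/-- The four Penrose conditions: `Adag` is a Moore–Penrose inverse of `A`. -/
def IsMoorePenrose {m : Type*} [Fintype m] (A Adag : Matrix m m ℝ) : Prop :=
  A * Adag * A = A ∧ Adag * A * Adag = Adag ∧ (A * Adag)ᵀ = A * Adag ∧ (Adag * A)ᵀ = Adag * A

/-- The `s × s` block of an `ns × ns` matrix in block position `(i, j)`. -/
def blk {n s : ℕ} (A : Matrix (Fin n × Fin s) (Fin n × Fin s) ℝ) (i j : Fin n) :
    Matrix (Fin s) (Fin s) ℝ :=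
  Matrix.of fun a b => A (i, a) (j, b)

/-- The resistance matrix built from a Moore–Penrose inverse `Ldag` of the Laplacian:
its `(i,j)` block is `K_{ii} + K_{jj} - 2 K_{ij}`, where `K_{ij}` are the blocks of `Ldag`. -/
def resist {n s : ℕ} (Ldag : Matrix (Fin n × Fin s) (Fin n × Fin s) ℝ) :
    Matrix (Fin n × Fin s) (Fin n × Fin s) ℝ :=
  Matrix.of fun p q =>
    Ldag (p.1, p.2) (p.1, q.2) + Ldag (q.1, p.2) (q.1, q.2) - 2 * Ldag p q

/-- The `ns × s` matrix `τ`, whose `i`-th block is `2 Iₛ - Σ_{j ∼ i} (W i j)⁻¹ R_{ji}`. -/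
def tauMat {n s : ℕ} (G : SimpleGraph (Fin n)) [DecidableRel G.Adj]
    (W : Fin n → Fin n → Matrix (Fin s) (Fin s) ℝ)
    (R : Matrix (Fin n × Fin s) (Fin n × Fin s) ℝ) :
    Matrix (Fin n × Fin s) (Fin s) ℝ :=
  Matrix.of fun p b =>
    ((2 : ℝ) • (1 : Matrix (Fin s) (Fin s) ℝ) -
      ∑ j ∈ univ.filter (fun j => G.Adj p.1 j), (W p.1 j)⁻¹ * blk R j p.1) p.2 b

/-- The block diagonal matrix `X̄` with the same diagonal blocks as `X`. -/
def bdiag {n s : ℕ} (X : Matrix (Fin n × Fin s) (Fin n × Fin s) ℝ) :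
    Matrix (Fin n × Fin s) (Fin n × Fin s) ℝ :=
  Matrix.of fun p q => if p.1 = q.1 then X (p.1, p.2) (p.1, q.2) else 0

/-! The all-ones block column `E = 1 ⊗ Iₛ` gives `R = K̄ E Eᵀ + E Eᵀ K̄ - 2 K`, where `K = L†`
and `K̄` is its block diagonal part. As `L E = 0`, this yields
`L R + 2 I = L K̄ E Eᵀ + 2 (I - L K)`. The Penrose conditions make `I - L K` symmetric with columns
in the null space of `Lᵀ`, so `I - L K = E C = Cᵀ Eᵀ` for some `C`. Hence `L R + 2 I = T Eᵀ` for
some `T`, which can be read off the diagonal blocks of `L R + 2 I`; these are the `τ_i`, because the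
diagonal blocks of `R` vanish. -/

theorem exists_eq_mul_of_mul_eq_zero {k l m p α : Type*} [Fintype l] [Fintype p]
    [NonUnitalNonAssocSemiring α] {A : Matrix k l α} {B : Matrix l p α}
    (hAB : ∀ v, A *ᵥ v = 0 → ∃ c, v = B *ᵥ c) {M : Matrix l m α} (hM : A * M = 0) :
    ∃ C : Matrix p m α, M = B * C := by
  have hcol (j : m) : ∃ c, M.col j = B *ᵥ c :=
    hAB _ (funext fun i => congrFun (congrFun hM i) j)
  choose c hc using hcol
  exact ⟨Matrix.of fun a j => c j a, Matrix.ext fun i j => congrFun (hc j) i⟩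

theorem transpose_mul_one_sub_mul_eq_zero {m α : Type*} [Fintype m] [DecidableEq m] [CommRing α]
    {A B : Matrix m m α} (hABA : A * B * A = A) (hAB : (A * B)ᵀ = A * B) :
    Aᵀ * (1 - A * B) = 0 := by
  have hleft : (1 - A * B) * A = 0 := by rw [Matrix.sub_mul, Matrix.one_mul, hABA, sub_self]
  simpa only [transpose_mul, transpose_sub, transpose_one, hAB, transpose_zero]
    using congrArg transpose hleft

section Blocks

variable {n s : ℕ}

theorem oneKron_mul_apply {m : Type*} (C : Matrix (Fin s) m ℝ) (p : Fin n × Fin s) (j : m) :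
    (oneKron n s * C) p j = C p.2 j := by
  simp [oneKron, Matrix.mul_apply]

theorem mul_oneKron_transpose_apply {m : Type*} (T : Matrix m (Fin s) ℝ) (i : m)
    (q : Fin n × Fin s) : (T * (oneKron n s)ᵀ) i q = T i q.2 := by
  simp [oneKron, Matrix.mul_apply]

theorem JKron_eq_oneKron_mul_transpose : JKron n s = oneKron n s * (oneKron n s)ᵀ := by
  ext p q
  rw [mul_oneKron_transpose_apply]
  simp [JKron, oneKron, Matrix.one_apply]

theorem bdiag_mul_oneKron_apply (X : Matrix (Fin n × Fin s) (Fin n × Fin s) ℝ)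
    (p : Fin n × Fin s) (b : Fin s) : (bdiag X * oneKron n s) p b = X p (p.1, b) := by
  simp [bdiag, oneKron, Matrix.mul_apply, Fintype.sum_prod_type]

theorem oneKron_transpose_mul_bdiag_apply (X : Matrix (Fin n × Fin s) (Fin n × Fin s) ℝ)
    (a : Fin s) (q : Fin n × Fin s) : ((oneKron n s)ᵀ * bdiag X) a q = X (q.1, a) q := by
  simp [bdiag, oneKron, Matrix.mul_apply, Fintype.sum_prod_type_right]

theorem bdiag_mul_oneKron_transpose_mul_oneKron (T : Matrix (Fin n × Fin s) (Fin s) ℝ) :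
    bdiag (T * (oneKron n s)ᵀ) * oneKron n s = T := by
  ext p b
  rw [bdiag_mul_oneKron_apply, mul_oneKron_transpose_apply]

theorem submatrix_mul_eq_sum_blk_mul {l m : Type*}
    (A : Matrix (Fin n × Fin s) (Fin n × Fin s) ℝ) (X : Matrix (Fin n × Fin s) m ℝ) (i : Fin n)
    (f : l → m) :
    (A * X).submatrix (Prod.mk i) f = ∑ j, blk A i j * X.submatrix (Prod.mk j) f := by
  ext a c
  simp [blk, Matrix.mul_apply, Matrix.sum_apply, Fintype.sum_prod_type]

theorem resist_eq_bdiag_mul_JKron_add (K : Matrix (Fin n × Fin s) (Fin n × Fin s) ℝ) :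
    resist K = bdiag K * JKron n s + JKron n s * bdiag K - (2 : ℝ) • K := by
  rw [JKron_eq_oneKron_mul_transpose, ← Matrix.mul_assoc, Matrix.mul_assoc (oneKron n s)]
  ext p q
  simp only [resist, Matrix.of_apply, Matrix.sub_apply, Matrix.add_apply, Matrix.smul_apply,
    smul_eq_mul, mul_oneKron_transpose_apply, bdiag_mul_oneKron_apply, oneKron_mul_apply,
    oneKron_transpose_mul_bdiag_apply]

theorem blk_resist_self (K : Matrix (Fin n × Fin s) (Fin n × Fin s) ℝ) (i : Fin n) :
    blk (resist K) i i = 0 := by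
  ext a b
  simp only [blk, resist, Matrix.of_apply, Matrix.zero_apply]
  ring

theorem exists_mul_resist_add_two_eq_mul_oneKron_transpose
    {L K : Matrix (Fin n × Fin s) (Fin n × Fin s) ℝ} (hL : L * oneKron n s = 0)
    (hker : ∀ v, Lᵀ *ᵥ v = 0 → ∃ c, v = oneKron n s *ᵥ c)
    (hLKL : L * K * L = L) (hLK : (L * K)ᵀ = L * K) :
    ∃ T : Matrix (Fin n × Fin s) (Fin s) ℝ,
      L * resist K + (2 : ℝ) • (1 : Matrix (Fin n × Fin s) (Fin n × Fin s) ℝ) =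
        T * (oneKron n s)ᵀ := by
  obtain ⟨C, hC⟩ :=
    exists_eq_mul_of_mul_eq_zero hker (transpose_mul_one_sub_mul_eq_zero hLKL hLK)
  have hCt : 1 - L * K = Cᵀ * (oneKron n s)ᵀ := by
    rw [← transpose_mul, ← hC, transpose_sub, transpose_one, hLK]
  have hLJ : L * JKron n s = 0 := by
    rw [JKron_eq_oneKron_mul_transpose, ← Matrix.mul_assoc, hL, Matrix.zero_mul]
  refine ⟨L * bdiag K * oneKron n s + (2 : ℝ) • Cᵀ, ?_⟩
  calc L * resist K + (2 : ℝ) • (1 : Matrix (Fin n × Fin s) (Fin n × Fin s) ℝ)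
      = L * bdiag K * JKron n s + L * JKron n s * bdiag K + (2 : ℝ) • (1 - L * K) := by
        rw [resist_eq_bdiag_mul_JKron_add, Matrix.mul_sub, Matrix.mul_add, Matrix.mul_smul,
          smul_sub, ← Matrix.mul_assoc, ← Matrix.mul_assoc]
        abel
    _ = L * bdiag K * JKron n s + (2 : ℝ) • (Cᵀ * (oneKron n s)ᵀ) := by
        rw [hLJ, Matrix.zero_mul, add_zero, hCt]
    _ = (L * bdiag K * oneKron n s + (2 : ℝ) • Cᵀ) * (oneKron n s)ᵀ := by
        rw [JKron_eq_oneKron_mul_transpose, Matrix.add_mul, Matrix.smul_mul,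
          Matrix.mul_assoc _ (oneKron n s)]

end Blocks

section Laplacian

variable {n s : ℕ} (G : SimpleGraph (Fin n)) [DecidableRel G.Adj]
  (W : Fin n → Fin n → Matrix (Fin s) (Fin s) ℝ)

theorem blk_lap (i j : Fin n) :
    blk (lap G W) i j = (if i = j then ∑ k ∈ univ.filter (fun k => G.Adj i k), (W i k)⁻¹ else 0) -
      if G.Adj i j then (W i j)⁻¹ else 0 := by
  ext a b
  by_cases hij : i = j
  · subst hij
    simp [blk, lap]
  · by_cases hadj : G.Adj i j <;> simp [blk, lap, hij, hadj]

theorem submatrix_lap_mul {l m : Type*} (X : Matrix (Fin n × Fin s) m ℝ) (i : Fin n) (f : l → m) :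
    (lap G W * X).submatrix (Prod.mk i) f =
      ∑ j ∈ univ.filter (fun j => G.Adj i j),
        (W i j)⁻¹ * (X.submatrix (Prod.mk i) f - X.submatrix (Prod.mk j) f) := by
  have ite_zero_mul (P : Prop) [Decidable P] (A : Matrix (Fin s) (Fin s) ℝ)
      (Y : Matrix (Fin s) l ℝ) : (if P then A else 0) * Y = if P then A * Y else 0 := by
    split_ifs <;> simp only [Matrix.zero_mul]
  simp only [submatrix_mul_eq_sum_blk_mul, blk_lap, Matrix.sub_mul, Matrix.mul_sub, ite_zero_mul,
    sum_sub_distrib, sum_ite_eq, mem_univ, if_true, Matrix.sum_mul, sum_filter]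

theorem lap_mul_oneKron : lap G W * oneKron n s = 0 := by
  ext ⟨i, a⟩ b
  have hone (j : Fin n) : (oneKron n s).submatrix (Prod.mk j) id = 1 := rfl
  have hrow := submatrix_lap_mul G W (oneKron n s) i id
  simp only [hone, sub_self, Matrix.mul_zero, sum_const_zero] at hrow
  exact congrFun (congrFun hrow a) b

theorem tauMat_eq_bdiag_mul_oneKron {R : Matrix (Fin n × Fin s) (Fin n × Fin s) ℝ}
    (hR : ∀ i, blk R i i = 0) :
    tauMat G W R = bdiag (lap G W * R + (2 : ℝ) • 1) * oneKron n s := by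
  ext ⟨i, a⟩ b
  have hblk : blk (lap G W * R) i i =
      -∑ j ∈ univ.filter (fun j => G.Adj i j), (W i j)⁻¹ * blk R j i := by
    calc blk (lap G W * R) i i
        = ∑ j ∈ univ.filter (fun j => G.Adj i j), (W i j)⁻¹ * (blk R i i - blk R j i) :=
          submatrix_lap_mul G W R i (Prod.mk i)
      _ = -∑ j ∈ univ.filter (fun j => G.Adj i j), (W i j)⁻¹ * blk R j i := by
          simp only [hR, zero_sub, Matrix.mul_neg, sum_neg_distrib]
  have hone : blk (1 : Matrix (Fin n × Fin s) (Fin n × Fin s) ℝ) i i = 1 :=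
    submatrix_one _ (Prod.mk_right_injective i)
  rw [bdiag_mul_oneKron_apply]
  calc tauMat G W R (i, a) b
      = ((2 : ℝ) • blk (1 : Matrix (Fin n × Fin s) (Fin n × Fin s) ℝ) i i +
          blk (lap G W * R) i i) a b := by rw [hblk, hone, ← sub_eq_add_neg]; rfl
    _ = (lap G W * R + (2 : ℝ) • 1) (i, a) (i, b) := add_comm _ _

theorem lap_mul_resist_add_two_general (_hW : ∀ i j, G.Adj i j → IsUnit (W i j))
    (hker : ∀ v, (lap G W)ᵀ *ᵥ v = 0 → ∃ c, v = oneKron n s *ᵥ c)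
    {K : Matrix (Fin n × Fin s) (Fin n × Fin s) ℝ}
    (hLKL : lap G W * K * lap G W = lap G W) (hLK : (lap G W * K)ᵀ = lap G W * K) :
    lap G W * resist K + (2 : ℝ) • (1 : Matrix (Fin n × Fin s) (Fin n × Fin s) ℝ) =
      tauMat G W (resist K) * (oneKron n s)ᵀ := by
  obtain ⟨T, hT⟩ :=
    exists_mul_resist_add_two_eq_mul_oneKron_transpose (lap_mul_oneKron G W) hker hLKL hLK
  rw [tauMat_eq_bdiag_mul_oneKron G W (blk_resist_self K), hT,
    bdiag_mul_oneKron_transpose_mul_oneKron]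

end Laplacian

/-- `L R + 2 I_{ns} = τ (1ᵀ ⊗ Iₛ)`. -/
theorem lap_mul_resist_add_two
    (n s : ℕ) (hn : 2 ≤ n) (hs : 1 ≤ s)
    (G : SimpleGraph (Fin n)) [DecidableRel G.Adj] (hconn : G.Connected)
    (W : Fin n → Fin n → Matrix (Fin s) (Fin s) ℝ)
    (hWsymm : ∀ i j, W i j = W j i)
    (hWpd : ∀ i j, G.Adj i j → (W i j).PosDef)
    (hPSD : (lap G W).PosSemidef)
    (hrank : (lap G W).rank = n * s - s)
    (hker : ∀ v : Fin n × Fin s → ℝ,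
      lap G W *ᵥ v = 0 ↔ ∃ c : Fin s → ℝ, v = oneKron n s *ᵥ c)
    (Ldag : Matrix (Fin n × Fin s) (Fin n × Fin s) ℝ)
    (hMP : IsMoorePenrose (lap G W) Ldag)
    (R : Matrix (Fin n × Fin s) (Fin n × Fin s) ℝ)
    (hR : R = resist Ldag) :
    lap G W * R + (2 : ℝ) • (1 : Matrix (Fin n × Fin s) (Fin n × Fin s) ℝ) =
      tauMat G W R * (oneKron n s)ᵀ := by
  have hLt : (lap G W)ᵀ = lap G W := isHermitian_iff_isSymm.mp hPSD.isHermitian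
  exact hR ▸ lap_mul_resist_add_two_general G W (fun i j h => (hWpd i j h).isUnit)
    (fun v hv => (hker v).mp (hLt ▸ hv)) hMP.1 hMP.2.2.1
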